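/- Corollary: every liquid democracy game has a (1/2)-Nash equilibrium x with SW(x) ≥ (1/2) · OPT. -/

import Mathlib

/-!
The optimal welfare is attained at a pure profile `s`, since the welfare of a mixed profile is an
average over pure ones (`exists_pure_ge`). Let `W` be the set of agents who vote in `s`, and consider
the game in which every agent of `W` is forced to vote with probability at least `1/2`. This game has
a Nash equilibrium `x` (`exists_constrained_equilibrium`).

* `x` is a `1/2`-Nash equilibrium: for any strategy `y` of agent `i`, the half-half mixture of voting
  and `y` is admissible and yields at least half of the utility of `y`, as utilities are nonnegative
  and affine in the agent's own strategy (`util_update`).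
* The welfare is at least `OPT / 2`, agent by agent. If `i` votes in `s`, deviating to a sure vote is
  admissible and yields `u i i`. If `i` has guru `w ≠ i` in `s`, she is unconstrained, and delegating
  directly to `w ∈ W` yields at least `u i w / 2` (`util_delegate_ge`).

The equilibrium is a solution of a variational inequality on a compact convex set, which comes from
Brouwer's fixed point theorem. The latter is derived from the nonexistence of a `C¹` retraction of a
ball onto its sphere, by the volume argument of Milnor and Rogers
(`not_exists_contDiff_retraction`).
-/

open Finset

/-- The guru of agent `i` under pure profile `s` (where `s i = some j` means `i`
delegates to `j`, with `s i = some i` meaning `i` votes herself, and `s i = none`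
meaning `i` abstains): follow delegation arcs for `n` steps; the endpoint is the
guru provided it votes itself. -/
def guru {n : ℕ} (s : Fin n → Option (Fin n)) (i : Fin n) : Option (Fin n) :=
  ((fun o => Option.bind o s)^[n] (some i)).bind
    (fun j => if s j = some j then some j else none)

/-- Utility of agent `i` in the pure profile `s`: `u i (g i)` if the guru exists, else `0`. -/
def pureUtil {n : ℕ} (u : Fin n → Fin n → ℝ) (s : Fin n → Option (Fin n)) (i : Fin n) : ℝ :=
  (guru s i).elim 0 (u i)

/-- A mixed strategy for a single agent: nonnegative, total probability at most one
(the residual probability is abstention). -/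
def IsStrat {n : ℕ} (y : Fin n → ℝ) : Prop := (∀ j, 0 ≤ y j) ∧ (∑ j, y j) ≤ 1

/-- A mixed strategy profile. -/
def IsMixed {n : ℕ} (x : Fin n → Fin n → ℝ) : Prop := ∀ i, IsStrat (x i)

/-- Probability that the independent randomization `x` produces the pure profile `s`. -/
def prob {n : ℕ} (x : Fin n → Fin n → ℝ) (s : Fin n → Option (Fin n)) : ℝ :=
  ∏ i, (s i).elim (1 - ∑ j, x i j) (x i)

/-- Expected utility of agent `i` under the mixed profile `x`. -/
def util {n : ℕ} (u x : Fin n → Fin n → ℝ) (i : Fin n) : ℝ :=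
  ∑ s : Fin n → Option (Fin n), prob x s * pureUtil u s i

/-- Expected social welfare of the mixed profile `x`. -/
def SW {n : ℕ} (u x : Fin n → Fin n → ℝ) : ℝ := ∑ i, util u x i

/-- The set of social-welfare values achievable by mixed profiles; `OPT` is its greatest element. -/
def SWvals {n : ℕ} (u : Fin n → Fin n → ℝ) : Set ℝ :=
  {w | ∃ x, IsMixed x ∧ w = SW u x}

/-- `x` is an `ε`-Nash equilibrium. -/
def EpsNash {n : ℕ} (u : Fin n → Fin n → ℝ) (ε : ℝ) (x : Fin n → Fin n → ℝ) : Prop :=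
  ∀ i y, IsStrat y → util u x i ≥ (1 - ε) * util u (Function.update x i y) i

/-- `x` is an (exact, mixed) Nash equilibrium. -/
def NashEq {n : ℕ} (u x : Fin n → Fin n → ℝ) : Prop :=
  ∀ i y, IsStrat y → util u x i ≥ util u (Function.update x i y) i


/-! ### Brouwer's fixed point theorem and variational inequalities -/

section Brouwer
open MeasureTheory Metric
open scoped RealInnerProductSpace

variable {E : Type*} [NormedAddCommGroup E] [InnerProductSpace ℝ E]

/-- The metric projection onto a nonempty compact convex set, with its variational
characterization; it is nonexpansive and fixes the set pointwise. -/
lemma exists_convex_projection {K : Set E} (hne : K.Nonempty) (hK : IsCompact K)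
    (hconv : Convex ℝ K) :
    ∃ P : E → E, (∀ x, P x ∈ K) ∧ (∀ x, ∀ y ∈ K, ⟪x - P x, y - P x⟫ ≤ 0) ∧
      LipschitzWith 1 P ∧ ∀ x ∈ K, P x = x := by
  choose P hP hmin using
    fun x => exists_norm_eq_iInf_of_complete_convex hne hK.isComplete hconv x
  have hin : ∀ x, ∀ y ∈ K, ⟪x - P x, y - P x⟫ ≤ 0 := fun x =>
    (norm_eq_iInf_iff_real_inner_le_zero hconv (hP x)).1 (hmin x)
  refine ⟨P, hP, hin, ?_, ?_⟩
  · refine LipschitzWith.of_dist_le_mul fun x y => ?_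
    have h1 := hin x (P y) (hP y)
    have h2 := hin y (P x) (hP x)
    have h3 : ⟪P x - P y, P x - P y⟫ ≤ ⟪x - y, P x - P y⟫ := by
      have e : ⟪x - y, P x - P y⟫ - ⟪P x - P y, P x - P y⟫
          = -⟪x - P x, P y - P x⟫ - ⟪y - P y, P x - P y⟫ := by
        simp only [inner_sub_left, inner_sub_right]; ring
      linarith
    rw [real_inner_self_eq_norm_sq] at h3
    have h4 := real_inner_le_norm (x - y) (P x - P y)
    rw [dist_eq_norm, dist_eq_norm, NNReal.coe_one, one_mul]
    by_contra hlt
    push Not at hlt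
    have := norm_nonneg (x - y)
    nlinarith
  · intro x hx
    have := hin x x hx
    rw [real_inner_self_eq_norm_sq] at this
    have h0 : ‖x - P x‖ = 0 := by nlinarith [norm_nonneg (x - P x)]
    exact (sub_eq_zero.1 (norm_eq_zero.1 h0)).symm

variable [FiniteDimensional ℝ E]

/-- Interpolation formula for determinants. Since `t ↦ det (1 + t A)` is a polynomial of degree at
most `dim E`, its value at `1` is a combination, with coefficients independent of `A`, of its
values at `dim E + 1` nodes, which may be chosen in `(0, δ]`. -/
lemma exists_det_weights {δ : ℝ} (hδ : 0 < δ) :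
    ∃ (v c : ℕ → ℝ), (∀ k ∈ range (Module.finrank ℝ E + 1), 0 < v k ∧ v k ≤ δ) ∧
      (∑ k ∈ range (Module.finrank ℝ E + 1), c k = 1) ∧
      ∀ A : E →L[ℝ] E, (ContinuousLinearMap.id ℝ E + A).det =
        ∑ k ∈ range (Module.finrank ℝ E + 1), c k * (ContinuousLinearMap.id ℝ E + v k • A).det := by
  let v : ℕ → ℝ := fun k => δ / (k + 1)
  have hinj : Set.InjOn v (range (Module.finrank ℝ E + 1)) := by
    intro a _ b _ h
    have h' : δ / (a + 1) = δ / (b + 1) := h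
    have ha : (a : ℝ) + 1 ≠ 0 := by positivity
    have hb : (b : ℝ) + 1 ≠ 0 := by positivity
    field_simp at h'
    exact_mod_cast (by linarith : (a : ℝ) = b)
  refine ⟨v, fun k => (Lagrange.basis (range (Module.finrank ℝ E + 1)) v k).eval 1, ?_, ?_, ?_⟩
  · intro k _
    refine ⟨by positivity, div_le_self hδ.le ?_⟩
    linarith [(Nat.cast_nonneg k : (0 : ℝ) ≤ k)]
  · rw [← Polynomial.eval_finsetSum, Lagrange.sum_basis hinj (by simp), Polynomial.eval_one]
  · intro A
    let b := Module.finBasis ℝ E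
    let M := LinearMap.toMatrix b b (A : E →ₗ[ℝ] E)
    let p : Polynomial ℝ := Matrix.det ((Polynomial.X : Polynomial ℝ) • M.map Polynomial.C
      + (1 : Matrix _ _ ℝ).map Polynomial.C)
    have hp : ∀ t : ℝ, p.eval t = (ContinuousLinearMap.id ℝ E + t • A).det := by
      intro t
      rw [ContinuousLinearMap.det, ← LinearMap.det_toMatrix b]
      have e : LinearMap.toMatrix b b
          ((ContinuousLinearMap.id ℝ E + t • A : E →L[ℝ] E) : E →ₗ[ℝ] E) = t • M + 1 := by
        simp [M, add_comm]
      rw [e]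
      simp only [p]
      rw [← Polynomial.coe_evalRingHom, RingHom.map_det]
      congr 1
      ext i j
      by_cases hij : i = j
      · subst hij
        simp
        ring
      · simp [hij]
        ring
    have hdeg : p.degree < (range (Module.finrank ℝ E + 1)).card := by
      have := Polynomial.natDegree_det_X_add_C_le M 1
      rw [Fintype.card_fin] at this
      rw [card_range]
      refine lt_of_le_of_lt Polynomial.degree_le_natDegree ?_
      exact_mod_cast Nat.lt_succ_of_le this
    have h1 := hp 1
    rw [one_smul] at h1
    rw [← h1, Lagrange.eq_interpolate hinj hdeg, Lagrange.interpolate_apply,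
      Polynomial.eval_finsetSum]
    refine sum_congr rfl fun k _ => ?_
    rw [Polynomial.eval_mul, Polynomial.eval_C, hp, mul_comm]

lemma det_eq_zero_of_range_orthogonal {A : E →L[ℝ] E} {w : E} (hw : w ≠ 0)
    (h : ∀ v, ⟪w, A v⟫ = 0) : A.det = 0 := by
  by_contra hdet
  obtain ⟨v, hv⟩ := (LinearMap.equivOfDetNeZero (A : E →ₗ[ℝ] E) hdet).surjective w
  have : A v = w := hv
  have h2 := h v
  rw [this, real_inner_self_eq_norm_sq] at h2
  exact hw (norm_eq_zero.1 (by simpa using h2))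

/-- There is no `C¹` retraction of the ball of radius `R` onto its sphere. With `g = r - id`, the map
`id + t g` is for small `t > 0` a bijection of the ball, so the integral over the ball of
`det (1 + t Dg)` is its volume; being polynomial in `t`, the integral has this value also at `t = 1`,
where the integrand `det Dr` vanishes identically. -/
lemma not_exists_contDiff_retraction {R : ℝ} (hR : 0 < R) {r : E → E} (hr : ContDiff ℝ 1 r)
    (hnorm : ∀ x, ‖r x‖ = R) (hid : ∀ x, ‖x‖ = R → r x = x) : False := by
  borelize E
  let μ : Measure E := Measure.addHaar
  let B : Set E := closedBall 0 R
  have hBc : IsCompact B := isCompact_closedBall 0 R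
  have hBm : MeasurableSet B := isClosed_closedBall.measurableSet
  let g : E → E := fun x => r x - x
  have hg : ContDiff ℝ 1 g := hr.sub contDiff_id
  obtain ⟨L, hL⟩ :=
    (hg.locallyLipschitz.locallyLipschitzOn (s := B)).exists_lipschitzOnWith_of_compact hBc
  let A : E → E →L[ℝ] E := fun x => fderiv ℝ g x
  have hA : Continuous A := hg.continuous_fderiv one_ne_zero
  have hgA : ∀ x, HasFDerivAt g (A x) x := fun x =>
    (hg.differentiable one_ne_zero x).hasFDerivAt
  obtain ⟨C, hC⟩ := hBc.exists_bound_of_continuousOn hA.continuousOn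
  obtain ⟨η, hη, hdet⟩ : ∃ η > 0, ∀ T : E →L[ℝ] E, ‖T‖ < η →
      0 < (ContinuousLinearMap.id ℝ E + T).det := by
    have hc : ContinuousAt (fun T : E →L[ℝ] E => (ContinuousLinearMap.id ℝ E + T).det) 0 :=
      (ContinuousLinearMap.continuous_det.comp (continuous_const.add continuous_id)).continuousAt
    have h1 : (0 : ℝ) < (ContinuousLinearMap.id ℝ E + 0).det := by
      simp [ContinuousLinearMap.det]
    obtain ⟨η, hη, h⟩ := Metric.eventually_nhds_iff.1 (hc.eventually (lt_mem_nhds h1))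
    exact ⟨η, hη, fun T hT => h (by simpa [dist_eq_norm] using hT)⟩
  let δ : ℝ := min 1 (min (1 / (L + 1) / 2) (η / (|C| + 1) / 2))
  have hδ : 0 < δ := by positivity
  obtain ⟨P, hPmem, hPin, hPlip, hPid⟩ := exists_convex_projection (K := B)
    ⟨0, by simp [B, hR.le]⟩ hBc (convex_closedBall 0 R)
  -- The projection of a point outside the ball lies on the sphere, where `g` vanishes.
  have hPsphere : ∀ z, z ∉ B → ‖P z‖ = R := by
    intro z hz
    have hPz : ‖P z‖ ≤ R := by simpa [B] using hPmem z
    by_contra hne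
    have hlt : 0 < R - ‖P z‖ := by
      linarith [lt_of_le_of_ne hPz hne]
    have hzP : 0 < ‖z - P z‖ := by
      refine norm_pos_iff.2 (sub_ne_zero.2 fun h => hz ?_)
      rw [h]
      exact hPmem z
    -- If `P z` were interior, a point on the way from `P z` to `z` would be closer to `z`.
    let s : ℝ := (R - ‖P z‖) / ‖z - P z‖
    have hs : 0 < s := div_pos hlt hzP
    have hmem : P z + s • (z - P z) ∈ B := by
      have : ‖P z + s • (z - P z)‖ ≤ R := by
        refine (norm_add_le _ _).trans ?_
        rw [norm_smul, Real.norm_eq_abs, abs_of_pos hs, div_mul_cancel₀ _ hzP.ne']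
        linarith
      simpa [B] using this
    have h := hPin z _ hmem
    rw [add_sub_cancel_left, inner_smul_right, real_inner_self_eq_norm_sq] at h
    have : 0 < s * ‖z - P z‖ ^ 2 := by positivity
    linarith
  have key : ∀ t, 0 < t → t ≤ δ →
      ∫ x in B, (ContinuousLinearMap.id ℝ E + t • A x).det ∂μ = μ.real B := by
    intro t ht htδ
    have ht1 : t ≤ 1 := htδ.trans (min_le_left _ _)
    have htL : t * L < 1 := by
      have h1 : t ≤ 1 / (L + 1) / 2 := htδ.trans ((min_le_right _ _).trans (min_le_left _ _))
      have h2 : (0 : ℝ) < L + 1 := by positivity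
      have h3 : t * (L + 1) ≤ 1 / 2 := by
        calc t * (L + 1) ≤ 1 / (L + 1) / 2 * (L + 1) := by gcongr
          _ = 1 / 2 := by field_simp
      nlinarith
    have htC : ∀ x ∈ B, ‖t • A x‖ < η := by
      intro x hx
      have h1 : t ≤ η / (|C| + 1) / 2 := htδ.trans ((min_le_right _ _).trans (min_le_right _ _))
      have h2 : (0 : ℝ) < |C| + 1 := by positivity
      have h3 : ‖A x‖ ≤ |C| + 1 := (hC x hx).trans (by linarith [le_abs_self C])
      rw [norm_smul, Real.norm_eq_abs, abs_of_pos ht]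
      calc t * ‖A x‖ ≤ η / (|C| + 1) / 2 * (|C| + 1) := by gcongr
        _ = η / 2 := by field_simp
        _ < η := by linarith
    let f : E → E := fun x => x + t • g x
    have hf' : ∀ x ∈ B, HasFDerivWithinAt f (ContinuousLinearMap.id ℝ E + t • A x) B x :=
      fun x _ => ((hasFDerivAt_id x).add ((hgA x).const_smul t)).hasFDerivWithinAt
    have hinj : Set.InjOn f B := by
      intro x hx y hy hxy
      have h1 : x - y = t • (g y - g x) := by
        have : x + t • g x = y + t • g y := hxy
        rw [smul_sub, sub_eq_sub_iff_add_eq_add, this, add_comm]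
      have h2 : ‖g y - g x‖ ≤ L * ‖x - y‖ := by
        have := hL.dist_le_mul y hy x hx
        rwa [dist_eq_norm, dist_comm, dist_eq_norm] at this
      have h3 : ‖x - y‖ ≤ t * (L * ‖x - y‖) := by
        conv_lhs => rw [h1, norm_smul, Real.norm_eq_abs, abs_of_pos ht]
        gcongr
      have h4 : ‖x - y‖ = 0 := by nlinarith [norm_nonneg (x - y)]
      exact sub_eq_zero.1 (norm_eq_zero.1 h4)
    have himg : f '' B = B := by
      apply Set.Subset.antisymm
      · rintro _ ⟨x, hx, rfl⟩
        have hx' : ‖x‖ ≤ R := by simpa [B] using hx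
        have e : f x = (1 - t) • x + t • r x := by
          simp only [f, g]; module
        have : ‖f x‖ ≤ R := by
          rw [e]
          refine (norm_add_le _ _).trans ?_
          rw [norm_smul, norm_smul, hnorm, Real.norm_eq_abs, Real.norm_eq_abs, abs_of_pos ht,
            abs_of_nonneg (by linarith)]
          nlinarith
        simpa [B] using this
      · intro y hy
        have hy' : ‖y‖ ≤ R := by simpa [B] using hy
        -- Solve `x + t • g (P x) = y` by contraction: composing with `P` makes `g` globally Lipschitz.
        have hcon : ContractingWith (t.toNNReal * L) (fun x => y - t • g (P x)) := by
          refine ⟨?_, LipschitzWith.of_dist_le_mul fun a b => ?_⟩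
          · rw [← NNReal.coe_lt_coe]
            simpa [ht.le] using htL
          · have h1 := hL.dist_le_mul (P a) (hPmem a) (P b) (hPmem b)
            have h2 := hPlip.dist_le_mul a b
            rw [dist_sub_left, dist_smul₀, Real.norm_eq_abs, abs_of_pos ht]
            simp only [NNReal.coe_mul, Real.coe_toNNReal _ ht.le, NNReal.coe_one, one_mul] at h2 ⊢
            rw [mul_assoc]
            gcongr
            exact h1.trans (by gcongr)
        let z := ContractingWith.fixedPoint _ hcon
        have hz : y - t • g (P z) = z := hcon.fixedPoint_isFixedPt
        by_cases hzB : z ∈ B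
        · refine ⟨z, hzB, ?_⟩
          rw [hPid z hzB] at hz
          simp only [f]
          nth_rewrite 1 [← hz]
          abel
        · exfalso
          have hg0 : g (P z) = 0 := by
            simp only [g, hid _ (hPsphere z hzB), sub_self]
          rw [hg0, smul_zero, sub_zero] at hz
          exact hzB (hz ▸ hy)
    have h := lintegral_abs_det_fderiv_eq_addHaar_image μ hBm hf' hinj
    rw [himg] at h
    rw [Measure.real, ← h, integral_eq_lintegral_of_nonneg_ae]
    · congr 1
      refine setLIntegral_congr_fun hBm fun x hx => ?_
      rw [abs_of_pos (hdet _ (htC x hx))]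
    · exact (ae_restrict_mem hBm).mono fun x hx => (hdet _ (htC x hx)).le
    · exact (ContinuousLinearMap.continuous_det.comp
        (continuous_const.add (hA.const_smul t))).aestronglyMeasurable
  obtain ⟨v, c, hv, hc, hvc⟩ := exists_det_weights (E := E) hδ
  have hintegrable : ∀ t : ℝ, IntegrableOn (fun x => (ContinuousLinearMap.id ℝ E + t • A x).det) B μ :=
    fun t => (ContinuousLinearMap.continuous_det.comp
        (continuous_const.add (hA.const_smul t))).continuousOn.integrableOn_compact hBc
  have hone : ∫ x in B, (ContinuousLinearMap.id ℝ E + A x).det ∂μ = μ.real B := by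
    rw [integral_congr_ae (Filter.Eventually.of_forall fun x => hvc (A x))]
    rw [integral_finsetSum _ fun k _ => (hintegrable (v k)).const_mul (c k)]
    simp_rw [integral_const_mul]
    rw [sum_congr rfl fun k hk => by rw [key (v k) (hv k hk).1 (hv k hk).2], ← sum_mul, hc, one_mul]
  have hzero : ∀ x, (ContinuousLinearMap.id ℝ E + A x).det = 0 := by
    intro x
    have hrx : HasFDerivAt r (ContinuousLinearMap.id ℝ E + A x) x := by
      have := (hasFDerivAt_id (𝕜 := ℝ) x).add (hgA x)
      refine this.congr_of_eventuallyEq (Filter.Eventually.of_forall fun y => ?_)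
      simp [g]
    have hrx0 : r x ≠ 0 := by
      intro h0
      have := hnorm x
      rw [h0, norm_zero] at this
      exact hR.ne this
    -- Differentiating `‖r‖² = R²` shows that the range of `Dr` is orthogonal to `r x`.
    refine det_eq_zero_of_range_orthogonal hrx0 fun w => ?_
    have h1 := hrx.norm_sq
    have h2 : HasFDerivAt (fun y => ‖r y‖ ^ 2) (0 : E →L[ℝ] ℝ) x := by
      simp only [hnorm]
      exact hasFDerivAt_const _ _
    have h3 := congrArg (fun T : E →L[ℝ] ℝ => T w) (h1.unique h2)
    have h4 : 2 * ⟪r x, (ContinuousLinearMap.id ℝ E + A x) w⟫ = 0 := by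
      simpa [inner_add_right, mul_add] using h3
    linarith
  simp only [hzero, integral_zero] at hone
  have hpos : 0 < μ.real B :=
    ENNReal.toReal_pos (measure_closedBall_pos μ 0 hR).ne' hBc.measure_lt_top.ne
  linarith

/-- A bounded `C¹` self-map has a fixed point. Cutting `f` off outside the ball of radius `M` by a
bump function `χ`, zeros of `x - χ x • f x` are fixed points of `f`; without zeros, normalizing
this map would retract the ball of radius `2 * M` onto its sphere. -/
lemma exists_fixedPoint_of_contDiff {M : ℝ} (hM : 0 < M) {f : E → E} (hf : ContDiff ℝ 1 f)
    (hbd : ∀ x, ‖f x‖ ≤ M) : ∃ x, f x = x := by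
  let χ : ContDiffBump (0 : E) := ⟨M, 2 * M, hM, by linarith⟩
  let h : E → E := fun x => x - χ x • f x
  by_cases hz : ∃ x, h x = 0
  · obtain ⟨x, hx⟩ := hz
    have hx' : x = χ x • f x := sub_eq_zero.1 hx
    have hn : ‖x‖ ≤ M := by
      rw [hx', norm_smul, Real.norm_eq_abs, abs_of_nonneg χ.nonneg]
      calc χ x * ‖f x‖ ≤ 1 * M := by
            gcongr
            · exact χ.le_one
            · exact hbd x
        _ = M := one_mul M
    have h1 : χ x = 1 := χ.one_of_mem_closedBall (by simpa using hn)
    rw [h1, one_smul] at hx'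
    exact ⟨x, hx'.symm⟩
  · push Not at hz
    exfalso
    have hh : ContDiff ℝ 1 h := contDiff_id.sub (χ.contDiff.smul hf)
    refine not_exists_contDiff_retraction (R := 2 * M) (by linarith)
      (r := fun x => ((2 * M) * ‖h x‖⁻¹) • h x) ?_ ?_ ?_
    · exact (contDiff_const.mul ((hh.norm ℝ hz).inv fun x => norm_ne_zero_iff.2 (hz x))).smul hh
    · intro x
      have : ‖h x‖ ≠ 0 := norm_ne_zero_iff.2 (hz x)
      rw [norm_smul, norm_mul, norm_inv, norm_norm, mul_assoc, inv_mul_cancel₀ this, mul_one,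
        Real.norm_eq_abs, abs_of_pos (by linarith)]
    · intro x hx
      have h0 : χ x = 0 := χ.zero_of_le_dist (by simp [χ, hx])
      have hhx : h x = x := by simp [h, h0]
      rw [hhx, hx, mul_inv_cancel₀ (by linarith), one_smul]

/-- Brouwer's fixed point theorem for bounded uniformly continuous self-maps of `E`, obtained from
the `C¹` case by uniform approximation. -/
theorem exists_fixedPoint_of_uniformContinuous {M : ℝ} (hM : 0 < M) {f : E → E}
    (hf : UniformContinuous f) (hbd : ∀ x, ‖f x‖ ≤ M) : ∃ x, f x = x := by
  obtain ⟨x, hxB, hx⟩ := (isCompact_closedBall (0 : E) (M + 1)).exists_isMinOn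
    ⟨0, by simp; linarith⟩ (f := fun x => ‖f x - x‖)
    (hf.continuous.sub continuous_id).norm.continuousOn
  refine ⟨x, ?_⟩
  by_contra hne
  have hpos : 0 < ‖f x - x‖ := norm_pos_iff.2 (sub_ne_zero.2 hne)
  obtain ⟨g, hg, hgf⟩ := hf.exists_contDiff_dist_le (ε := min 1 ‖f x - x‖) (by positivity)
  have hgb : ∀ y, ‖g y‖ ≤ M + 1 := by
    intro y
    have h1 := (hgf y).trans_le (min_le_left _ _)
    rw [dist_eq_norm] at h1
    have h2 := norm_add_le (g y - f y) (f y)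
    rw [sub_add_cancel] at h2
    linarith [hbd y]
  obtain ⟨y, hy⟩ := exists_fixedPoint_of_contDiff (M := M + 1) (by linarith)
    (hg.of_le (by exact_mod_cast le_top)) hgb
  have hyB : y ∈ closedBall (0 : E) (M + 1) := by
    have := hgb y
    rw [hy] at this
    simpa using this
  have h1 : ‖f x - x‖ ≤ ‖f y - y‖ := hx hyB
  have h2 := (hgf y).trans_le (min_le_right _ _)
  rw [hy, dist_comm, dist_eq_norm] at h2
  linarith

/-- Solvability of variational inequalities on compact convex sets: with `P` the projection onto
`K`, a fixed point of `x ↦ P (P x + F (P x))` is a solution. -/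
theorem exists_variational_solution {K : Set E} (hne : K.Nonempty) (hK : IsCompact K)
    (hconv : Convex ℝ K) {F : E → E} (hF : Continuous F) :
    ∃ x ∈ K, ∀ y ∈ K, ⟪F x, y - x⟫ ≤ 0 := by
  obtain ⟨P, hPmem, hPin, hPlip, hPid⟩ := exists_convex_projection hne hK hconv
  obtain ⟨M, hM⟩ := hK.isBounded.exists_norm_le
  have huc : UniformContinuous fun x => P (P x + F (P x)) := by
    refine hPlip.uniformContinuous.comp (hPlip.uniformContinuous.add ?_)
    have h1 := hK.uniformContinuousOn_of_continuous hF.continuousOn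
    rw [← uniformContinuousOn_univ]
    exact h1.comp hPlip.uniformContinuous.uniformContinuousOn fun x _ => hPmem x
  obtain ⟨x, hx⟩ := exists_fixedPoint_of_uniformContinuous (M := |M| + 1) (by positivity) huc
    fun x => (hM _ (hPmem _)).trans (by linarith [le_abs_self M])
  have hxK : x ∈ K := hx ▸ hPmem _
  refine ⟨x, hxK, fun y hy => ?_⟩
  rw [hPid x hxK] at hx
  have := hPin (x + F x) y hy
  rwa [hx, add_sub_cancel_left] at this

end Brouwer

/-! ### Expected utilities in the delegation game -/

section Game
open Function

variable {n : ℕ}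

/-- The probability that the mixed strategy `y` gives to the pure strategy `o`, where `none` is
abstention. -/
def optWeight (y : Fin n → ℝ) (o : Option (Fin n)) : ℝ := o.elim (1 - ∑ j, y j) y

/-- The pure strategy `o` as a mixed strategy; abstention is the zero vector. -/
def pureStrat (o : Option (Fin n)) : Fin n → ℝ := o.elim 0 fun j => Pi.single j 1

lemma optWeight_nonneg {y : Fin n → ℝ} (hy : IsStrat y) (o : Option (Fin n)) :
    0 ≤ optWeight y o := by
  cases o with
  | none => simpa [optWeight] using hy.2
  | some j => exact hy.1 j

lemma sum_optWeight (y : Fin n → ℝ) : ∑ o, optWeight y o = 1 := by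
  simp [Fintype.sum_option, optWeight]

lemma optWeight_pureStrat (o o' : Option (Fin n)) :
    optWeight (pureStrat o) o' = if o' = o then 1 else 0 := by
  cases o <;> cases o' <;> simp [optWeight, pureStrat, Pi.single_apply]

lemma isStrat_pureStrat (o : Option (Fin n)) : IsStrat (pureStrat o) := by
  cases o with
  | none => simp [IsStrat, pureStrat]
  | some j =>
    refine ⟨fun k => ?_, by simp [pureStrat]⟩
    simp only [pureStrat, Option.elim_some, Pi.single_apply]
    split_ifs <;> norm_num

lemma prob_eq (x : Fin n → Fin n → ℝ) (s : Fin n → Option (Fin n)) :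
    prob x s = ∏ i, optWeight (x i) (s i) := rfl

lemma prob_nonneg {x : Fin n → Fin n → ℝ} (hx : IsMixed x) (s : Fin n → Option (Fin n)) :
    0 ≤ prob x s := prod_nonneg fun i _ => optWeight_nonneg (hx i) (s i)

lemma sum_prob (x : Fin n → Fin n → ℝ) : ∑ s, prob x s = 1 := by
  have h := Finset.prod_univ_sum (fun _ : Fin n => (univ : Finset (Option (Fin n))))
    (fun i o => optWeight (x i) o)
  simp only [sum_optWeight, prod_const_one, Fintype.piFinset_univ] at h
  exact h.symm

lemma prob_update (x : Fin n → Fin n → ℝ) (k : Fin n) (y : Fin n → ℝ)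
    (s : Fin n → Option (Fin n)) :
    prob (update x k y) s =
      optWeight y (s k) * ∏ i ∈ univ.erase k, optWeight (x i) (s i) := by
  rw [prob_eq, ← mul_prod_erase univ _ (mem_univ k), update_self]
  congr 1
  refine prod_congr rfl fun i hi => ?_
  rw [update_of_ne (ne_of_mem_erase hi)]

/-- Law of total expectation over the choice of agent `k`; in particular expected utilities are
affine in each agent's mixed strategy. -/
lemma util_update (u x : Fin n → Fin n → ℝ) (i k : Fin n) (y : Fin n → ℝ) :
    util u (update x k y) i =
      ∑ o, optWeight y o * util u (update x k (pureStrat o)) i := by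
  simp only [util, mul_sum]
  rw [sum_comm]
  refine sum_congr rfl fun s _ => ?_
  simp only [prob_update, optWeight_pureStrat]
  rw [sum_eq_single (s k) (fun o _ ho => by simp [ho.symm]) (by simp)]
  simp
  ring

lemma isMixed_update {x : Fin n → Fin n → ℝ} (hx : IsMixed x) (k : Fin n) {y : Fin n → ℝ}
    (hy : IsStrat y) : IsMixed (update x k y) := by
  intro i
  by_cases h : i = k
  · subst h; simpa using hy
  · simpa [h] using hx i

lemma util_nonneg {u x : Fin n → Fin n → ℝ} (hu : ∀ i j, 0 ≤ u i j) (hx : IsMixed x)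
    (i : Fin n) : 0 ≤ util u x i := by
  refine sum_nonneg fun s _ => mul_nonneg (prob_nonneg hx s) ?_
  unfold pureUtil
  cases guru s i with
  | none => simp
  | some j => exact hu i j

lemma prob_eq_zero {x : Fin n → Fin n → ℝ} {k : Fin n} {o : Option (Fin n)}
    (hk : x k = pureStrat o) {s : Fin n → Option (Fin n)} (hs : s k ≠ o) : prob x s = 0 := by
  rw [prob_eq]
  refine prod_eq_zero (mem_univ k) ?_
  rw [hk, optWeight_pureStrat, if_neg hs]

lemma iterate_voter {s : Fin n → Option (Fin n)} {w : Fin n} (hw : s w = some w) (m : ℕ) :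
    (fun o => Option.bind o s)^[m] (some w) = some w :=
  Function.iterate_fixed (by simpa using hw) m

/-- This includes the case `i = w` of a voter, who is her own guru. -/
lemma guru_eq_of_delegate {s : Fin n → Option (Fin n)} {i w : Fin n} (hi : s i = some w)
    (hw : s w = some w) : guru s i = some w := by
  obtain ⟨m, rfl⟩ : ∃ m, n = m + 1 := ⟨n - 1, by have := i.pos; omega⟩
  simp only [guru, Function.iterate_succ_apply, Option.bind_some, hi]
  rw [iterate_voter hw]
  simp [hw]

lemma voter_of_guru {s : Fin n → Option (Fin n)} {i w : Fin n} (h : guru s i = some w) :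
    s w = some w := by
  unfold guru at h
  obtain ⟨j, -, hj⟩ := Option.bind_eq_some_iff.1 h
  split_ifs at hj with hs
  obtain rfl : j = w := by simpa using hj
  exact hs

lemma util_of_delegate (u : Fin n → Fin n → ℝ) {x : Fin n → Fin n → ℝ} {i w : Fin n}
    (hi : x i = pureStrat (some w)) (hw : x w = pureStrat (some w)) : util u x i = u i w := by
  have : ∀ s, prob x s * pureUtil u s i = prob x s * u i w := by
    intro s
    by_cases h1 : s i = some w
    · by_cases h2 : s w = some w
      · simp [pureUtil, guru_eq_of_delegate h1 h2]
      · simp [prob_eq_zero hw h2]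
    · simp [prob_eq_zero hi h1]
  simp only [util, this]
  rw [← sum_mul, sum_prob, one_mul]

/-- Delegating directly to `w` secures `u i w` whenever `w` votes, whatever the others do. -/
lemma util_delegate_ge {u x : Fin n → Fin n → ℝ} (hu : ∀ i j, 0 ≤ u i j) (hx : IsMixed x)
    {i w : Fin n} (hiw : i ≠ w) :
    x w w * u i w ≤ util u (update x i (pureStrat (some w))) i := by
  set x' := update x i (pureStrat (some w)) with hx'
  have hmix : IsMixed x' := isMixed_update hx i (isStrat_pureStrat _)
  have hw : x' w = x w := by simp [hx', hiw.symm]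
  have h := util_update u x' i w (x' w)
  rw [update_eq_self] at h
  rw [h]
  have h1 : util u (update x' w (pureStrat (some w))) i = u i w :=
    util_of_delegate u (by simp [hx', hiw]) (by simp)
  have h2 := single_le_sum (s := univ) (a := some w)
    (f := fun o => optWeight (x' w) o * util u (update x' w (pureStrat o)) i)
    (fun o _ => mul_nonneg (optWeight_nonneg (hmix w) o)
      (util_nonneg hu (isMixed_update hmix w (isStrat_pureStrat o)) i)) (mem_univ _)
  simp only [h1] at h2
  rwa [hw] at h2 ⊢

lemma continuous_util (u : Fin n → Fin n → ℝ) (i : Fin n) :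
    Continuous fun x : Fin n → Fin n → ℝ => util u x i := by
  refine continuous_finsetSum _ fun s _ => Continuous.mul ?_ continuous_const
  refine continuous_finsetProd _ fun k _ => ?_
  cases s k with
  | none => simp only [Option.elim_none]; fun_prop
  | some j => simp only [Option.elim_some]; fun_prop

/-- The welfare of a mixed profile is an average of welfares of pure profiles. -/
lemma exists_pure_ge {u x : Fin n → Fin n → ℝ} (hx : IsMixed x) :
    ∃ s : Fin n → Option (Fin n), SW u x ≤ ∑ i, pureUtil u s i := by
  by_contra! h
  have e : SW u x = ∑ s, prob x s * ∑ i, pureUtil u s i := by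
    simp only [SW, util, mul_sum]
    exact sum_comm
  have h1 : ∑ s, prob x s * ∑ i, pureUtil u s i < ∑ s, prob x s * SW u x := by
    refine sum_lt_sum (fun s _ => mul_le_mul_of_nonneg_left (h s).le (prob_nonneg hx s)) ?_
    obtain ⟨s, hs⟩ : ∃ s, prob x s ≠ 0 := by
      by_contra! h0
      simpa [h0] using sum_prob x
    exact ⟨s, mem_univ s,
      mul_lt_mul_of_pos_left (h s) (lt_of_le_of_ne (prob_nonneg hx s) hs.symm)⟩
  rw [← sum_mul, sum_prob, one_mul] at h1
  linarith

/-! ### Equilibria of the constrained game -/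

/-- Mixed profiles in which every agent of `W` votes with probability at least `1 / 2`. -/
def constrained (W : Set (Fin n)) : Set (Fin n → Fin n → ℝ) :=
  {x | IsMixed x ∧ ∀ w ∈ W, 1 / 2 ≤ x w w}

/-- The game restricted to `constrained W` has a Nash equilibrium: own utilities are affine in own
strategies, so an equilibrium is a solution of the variational inequality for the field of own
gradients. -/
lemma exists_constrained_equilibrium (u : Fin n → Fin n → ℝ) (W : Set (Fin n)) :
    ∃ x ∈ constrained W, ∀ i y, update x i y ∈ constrained W →
      util u (update x i y) i ≤ util u x i := by
  let toProf : EuclideanSpace ℝ (Fin n × Fin n) → Fin n → Fin n → ℝ := fun p i j => p (i, j)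
  let K : Set (EuclideanSpace ℝ (Fin n × Fin n)) := toProf ⁻¹' constrained W
  have hcont : Continuous toProf := by fun_prop
  have hne : K.Nonempty := by
    refine ⟨WithLp.toLp 2 fun q => pureStrat (some q.1) q.2,
      fun i => isStrat_pureStrat (some i), ?_⟩
    intro w _
    simp only [toProf, pureStrat, Option.elim_some, Pi.single_eq_same]
    norm_num
  have hclosed : IsClosed K := by
    refine IsClosed.preimage hcont ?_
    simp only [constrained, IsMixed, IsStrat, Set.ofPred_and, Set.ofPred_forall]
    refine IsClosed.inter (isClosed_iInter fun i => IsClosed.inter (isClosed_iInter fun j => ?_) ?_)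
      (isClosed_iInter fun i => isClosed_iInter fun _ => ?_)
    · exact isClosed_le (by fun_prop) (by fun_prop)
    · exact isClosed_le (by fun_prop) (by fun_prop)
    · exact isClosed_le (by fun_prop) (by fun_prop)
  have hcomp : IsCompact K := by
    refine Metric.isCompact_of_isClosed_isBounded hclosed ?_
    refine (Metric.isBounded_closedBall (x := (0 : EuclideanSpace ℝ (Fin n × Fin n)))
      (r := √(∑ _q : Fin n × Fin n, (1 : ℝ)))).subset ?_
    intro p hp
    rw [mem_closedBall_zero_iff, EuclideanSpace.norm_eq]
    refine Real.sqrt_le_sqrt (sum_le_sum fun q _ => ?_)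
    have h := hp.1 q.1
    have h0 : 0 ≤ p q := h.1 q.2
    have h1 : p q ≤ 1 :=
      (single_le_sum (f := fun j => toProf p q.1 j) (fun j _ => h.1 j) (mem_univ q.2)).trans h.2
    rw [Real.norm_eq_abs, abs_of_nonneg h0]
    nlinarith
  have hconv : Convex ℝ K := by
    intro p hp q hq a b ha hb hab
    refine ⟨fun i => ⟨fun j => ?_, ?_⟩, fun w hw => ?_⟩
    · exact add_nonneg (mul_nonneg ha ((hp.1 i).1 j)) (mul_nonneg hb ((hq.1 i).1 j))
    · have e : ∑ j, toProf (a • p + b • q) i j = a * ∑ j, toProf p i j + b * ∑ j, toProf q i j := by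
        rw [mul_sum, mul_sum, ← sum_add_distrib]; rfl
      rw [e]
      nlinarith [(hp.1 i).2, (hq.1 i).2]
    · have e : toProf (a • p + b • q) w w = a * toProf p w w + b * toProf q w w := rfl
      rw [e]
      nlinarith [hp.2 w hw, hq.2 w hw]
  -- Own payoffs of pure deviations; `F` collects the own gradients, abstention being the origin.
  let G : (Fin n → Fin n → ℝ) → Fin n → Option (Fin n) → ℝ :=
    fun x i o => util u (update x i (pureStrat o)) i
  have hG : ∀ i o, Continuous fun x => G x i o := fun i o =>
    (continuous_util u i).comp (continuous_id.update i continuous_const)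
  let F : EuclideanSpace ℝ (Fin n × Fin n) → EuclideanSpace ℝ (Fin n × Fin n) := fun p =>
    WithLp.toLp 2 fun q => G (toProf p) q.1 (some q.2) - G (toProf p) q.1 none
  have hF : Continuous F := by
    refine (PiLp.continuous_toLp 2 _).comp (continuous_pi fun q => ?_)
    exact ((hG _ _).comp hcont).sub ((hG _ _).comp hcont)
  obtain ⟨p, hp, hvar⟩ := exists_variational_solution hne hcomp hconv hF
  refine ⟨toProf p, hp, fun i y hy => ?_⟩
  have haff : ∀ z : Fin n → ℝ, util u (update (toProf p) i z) i =
      G (toProf p) i none + ∑ j, z j * (G (toProf p) i (some j) - G (toProf p) i none) := by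
    intro z
    rw [util_update, Fintype.sum_option]
    simp only [optWeight, Option.elim_none, Option.elim_some, mul_sub, sum_sub_distrib, ← sum_mul, G]
    ring
  -- Testing with a unilateral deviation isolates the row of agent `i`.
  have h := hvar (WithLp.toLp 2 fun q => update (toProf p) i y q.1 q.2) hy
  rw [PiLp.inner_apply, Fintype.sum_prod_type, sum_eq_single i] at h
  · have hself := haff (toProf p i)
    rw [update_eq_self] at hself
    rw [hself, haff y]
    have e : ∑ j, y j * (G (toProf p) i (some j) - G (toProf p) i none)
        - ∑ j, toProf p i j * (G (toProf p) i (some j) - G (toProf p) i none) ≤ 0 := by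
      rw [← sum_sub_distrib]
      refine le_trans (le_of_eq (sum_congr rfl fun j _ => ?_)) h
      simp [F, toProf]
      ring
    linarith
  · intro k _ hk
    refine sum_eq_zero fun j _ => ?_
    simp [hk, toProf]
  · simp

end Game

/-- Corollary: every liquid democracy game has a (1/2)-Nash equilibrium with social
welfare at least (1/2) · OPT. -/
theorem stmt10 {n : ℕ} (u : Fin n → Fin n → ℝ) (hu : ∀ i j, 0 ≤ u i j ∧ u i j ≤ 1)
    (OPT : ℝ) (hOPT : IsGreatest (SWvals u) OPT) :
    ∃ x : Fin n → Fin n → ℝ, IsMixed x ∧ EpsNash u (1/2) x ∧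
      SW u x ≥ (1/2) * OPT := by
  have hu0 : ∀ i j, 0 ≤ u i j := fun i j => (hu i j).1
  obtain ⟨xopt, hxopt, rfl⟩ := hOPT.1
  obtain ⟨s, hs⟩ := exists_pure_ge (u := u) hxopt
  let W : Set (Fin n) := {w | s w = some w}
  obtain ⟨x, hx, heq⟩ := exists_constrained_equilibrium u W
  have hmix : IsMixed x := hx.1
  have hdev : ∀ i y, IsStrat y → (i ∈ W → 1 / 2 ≤ y i) →
      util u (Function.update x i y) i ≤ util u x i := by
    intro i y hy hi
    refine heq i y ⟨isMixed_update hmix i hy, fun w hw => ?_⟩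
    by_cases h : w = i
    · subst h; simpa using hi hw
    · simpa [h] using hx.2 w hw
  refine ⟨x, hmix, fun i y hy => ?_, ?_⟩
  -- Any deviation `y` becomes admissible when mixed half-half with voting, at the cost of a factor 2.
  · let e : Fin n → ℝ := pureStrat (some i)
    have he : IsStrat e := isStrat_pureStrat _
    let z : Fin n → ℝ := fun j => 1 / 2 * e j + 1 / 2 * y j
    have hzsum : ∑ j, z j = 1 / 2 * ∑ j, e j + 1 / 2 * ∑ j, y j := by
      simp only [z, sum_add_distrib, mul_sum]
    have hz : IsStrat z := by
      refine ⟨fun j => ?_, ?_⟩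
      · have := he.1 j
        have := hy.1 j
        simp only [z]
        linarith
      · rw [hzsum]
        linarith [he.2, hy.2]
    have hzi : 1 / 2 ≤ z i := by
      have h1 : e i = 1 := by simp [e, pureStrat]
      simp only [z, h1]
      linarith [hy.1 i]
    have hlin : util u (Function.update x i z) i =
        1 / 2 * util u (Function.update x i e) i + 1 / 2 * util u (Function.update x i y) i := by
      rw [util_update u x i i z, util_update u x i i e, util_update u x i i y, mul_sum, mul_sum,
        ← sum_add_distrib]
      refine sum_congr rfl fun o _ => ?_
      have : optWeight z o = 1 / 2 * optWeight e o + 1 / 2 * optWeight y o := by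
        cases o with
        | none => simp only [optWeight, Option.elim_none, hzsum]; ring
        | some j => rfl
      rw [this]
      ring
    have h1 := hdev i z hz fun _ => hzi
    have h2 := util_nonneg hu0 (isMixed_update hmix i he) i
    linarith
  -- Each agent can secure half of her utility in `s`: by voting, or by delegating to her guru there.
  · have hi : ∀ i, 1 / 2 * pureUtil u s i ≤ util u x i := by
      intro i
      unfold pureUtil
      cases hg : guru s i with
      | none => simpa using util_nonneg hu0 hmix i
      | some w =>
        have hw : s w = some w := voter_of_guru hg
        simp only [Option.elim_some]
        by_cases hiw : i = w
        · subst hiw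
          have h1 := hdev i (pureStrat (some i)) (isStrat_pureStrat _)
            fun _ => by simp [pureStrat]; norm_num
          rw [util_of_delegate u (w := i) (by simp) (by simp)] at h1
          linarith [hu0 i i]
        · have hiW : i ∉ W := by
            intro hiW
            have := guru_eq_of_delegate (i := i) hiW hiW
            rw [hg] at this
            exact hiw (Option.some.inj this).symm
          have h1 := hdev i (pureStrat (some w)) (isStrat_pureStrat _) fun h => absurd h hiW
          have h2 := util_delegate_ge hu0 hmix hiw
          have h3 := mul_le_mul_of_nonneg_right (hx.2 w hw) (hu0 i w)
          linarith
    calc SW u x ≥ ∑ i, 1 / 2 * pureUtil u s i := sum_le_sum fun i _ => hi i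
      _ = 1 / 2 * ∑ i, pureUtil u s i := by rw [mul_sum]
      _ ≥ 1 / 2 * SW u xopt := by linarith
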